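/- arXiv:2510.19468 — 2 statements merged into one kernel-verified Lean document; each statement's English description precedes it below -/
import Mathlib

section
/- Fix a nonnegative integer ℓ, and define U₁(x) := (1/(2π)) ∫_ℝ x^{−(3+it)} e^{(3+it)²} (16π²)^{−(3+it)} / (3+it) dt, i.e. the contour integral (1/2πi)∫_{Re u = 3} x^{−u} e^{u²} (16π²)^{−u} du/u. Then there exist a constant C > 0 and a threshold k₀ such that for all even integers k ≥ k₀ and all real y with 1 ≤ y ≤ k², |U_ℓ(y,k) − U₁(y/k²)| ≤ C/k. -/
/-!
Put `b = k/2`, `a₁ = (k+ℓ-1)/2`, `a₂ = (k-ℓ+1)/2`, `Z = 16π² y/k²`, and write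
`g_a(u) = b^{-u} Γ(a+u)/Γ(a)` (`gammaRatio`). The integrands of `U_ℓ(y,k)` and `U₁(y/k²)` on
`Re u = 3` are `e^{u²} Z^{-u} g_{a₁}(u) g_{a₂}(u) / u` and `e^{u²} Z^{-u} / u`
(`gammaFac_ratio`).

On the line `Re u = 3` the factor `Z^{-u}` can be as large as a constant times `k⁶`, so the
difference cannot be estimated there. But `g_{a₁} g_{a₂} - 1` vanishes at `u = 0`, so the
difference of the integrands is holomorphic on `Re u > -1` after removing the singularity at `0`,
and the factor `e^{u²}` allows the contour to be moved to `Re u = 0`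
(`vertical_shift_aux`), where `|Z^{-u}| = 1`. It remains to see that
`|g_a(it) - 1| ≪ (|t| + t²)/k`.

For this, `g_a(it) = E[(X/b)^{it}]` with `X` Gamma-distributed of shape `a`. With `x = X/b`, the
bounds `|log x - (x-1)| ≤ x - 2 + 1/x` and `log² x ≤ x - 2 + 1/x` show that `x^{it}` equals
`1 + it(x-1)` up to `(|t| + 3t²)(x - 2 + 1/x)`. The expectations of `x` and `1/x` are `a/b` and
`b/(a-1)`, both `1 + O(1/k)`, which gives the estimate (`gammaRatio_sub_one_le`,
`gammaRatio_rate`). The argument is uniform in `y > 0`.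
-/

open Complex Real MeasureTheory UpperHalfPlane

/-- `γ_ℓ(s,k) = (2π)^{-2s} Γ(s + (k+ℓ)/2 − 1) Γ(s + (k−ℓ)/2)`. -/
noncomputable def gammaFac (ℓ : ℕ) (k : ℤ) (s : ℂ) : ℂ :=
  (2 * (Real.pi : ℂ)) ^ (-(2 * s)) * Complex.Gamma (s + ((k : ℂ) + ℓ) / 2 - 1) *
    Complex.Gamma (s + ((k : ℂ) - ℓ) / 2)

/-- `U_ℓ(y,k) = (1/2πi)∫_{Re u = 3} y^{−u} e^{u²} (γ_ℓ(1/2+u,k)/γ_ℓ(1/2,k)) du/u`. -/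
noncomputable def Ufun (ℓ : ℕ) (y : ℝ) (k : ℤ) : ℂ :=
  (1 / (2 * Real.pi)) * ∫ t : ℝ,
    (y : ℂ) ^ (-(3 + t * Complex.I)) * Complex.exp ((3 + t * Complex.I) ^ 2) *
      (gammaFac ℓ k (1/2 + 3 + t * Complex.I) / gammaFac ℓ k (1/2)) / (3 + t * Complex.I)

/-- `U₁(x) = (1/2πi)∫_{Re u = 3} x^{−u} e^{u²} (16π²)^{−u} du/u`. -/
noncomputable def U1 (x : ℝ) : ℂ :=
  (1 / (2 * Real.pi)) * ∫ t : ℝ,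
    (x : ℂ) ^ (-(3 + t * Complex.I)) * Complex.exp ((3 + t * Complex.I) ^ 2) *
      (16 * (Real.pi : ℂ) ^ 2) ^ (-(3 + t * Complex.I)) / (3 + t * Complex.I)

/-! ### Elementary inequalities -/

/-- With `s = log x` this is `s² ≤ 2 cosh s - 2 = 4 sinh² (s/2)`. -/
theorem log_sq_le_aux {x : ℝ} (hx : 0 < x) : Real.log x ^ 2 ≤ x - 2 + 1 / x := by
  have h : (Real.log x / 2) ^ 2 ≤ Real.sinh (Real.log x / 2) ^ 2 := by
    rcases le_total 0 (Real.log x / 2) with h | h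
    · have := Real.self_le_sinh_iff.2 h
      nlinarith
    · have := Real.sinh_le_self_iff.2 h
      nlinarith
  have h2 := Real.cosh_two_mul (Real.log x / 2)
  have h3 := Real.cosh_sq (Real.log x / 2)
  rw [mul_div_cancel₀ _ (two_ne_zero), Real.cosh_log hx] at h2
  rw [one_div]
  linarith

theorem cexp_taylor_aux (θ : ℝ) :
    ‖Complex.exp (θ * Complex.I) - 1 - θ * Complex.I‖ ≤ 3 * θ ^ 2 := by
  have hn : ‖(θ : ℂ) * Complex.I‖ = |θ| := by simp
  rcases le_total |θ| 1 with h | h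
  · have := Complex.norm_exp_sub_one_sub_id_le (x := (θ : ℂ) * Complex.I) (by rw [hn]; exact h)
    rw [hn, sq_abs] at this
    nlinarith [sq_nonneg θ]
  · calc _ ≤ ‖Complex.exp (θ * Complex.I)‖ + ‖(1 : ℂ)‖ + ‖(θ : ℂ) * Complex.I‖ :=
          (norm_sub_le _ _).trans (by gcongr; exact norm_sub_le _ _)
      _ = 1 + 1 + |θ| := by rw [hn, Complex.norm_exp_ofReal_mul_I]; simp
      _ ≤ 3 * θ ^ 2 := by rw [← sq_abs]; nlinarith

/-- Expansion of `x^{it}` to first order in `x - 1`. The error majorant `x - 2 + 1/x` is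
`(x-1)²/x`, whose Gamma moments are explicit. -/
theorem cpow_taylor_aux {x : ℝ} (hx : 0 < x) (t : ℝ) :
    ‖(x : ℂ) ^ ((t : ℂ) * Complex.I) - 1 - ((t * (x - 1) : ℝ) : ℂ) * Complex.I‖ ≤
      (|t| + 3 * t ^ 2) * (x - 2 + 1 / x) := by
  have hx0 : (x : ℂ) ≠ 0 := by exact_mod_cast hx.ne'
  have e : (x : ℂ) ^ ((t : ℂ) * Complex.I) - 1 - ((t * (x - 1) : ℝ) : ℂ) * Complex.I
      = (Complex.exp ((t * Real.log x : ℝ) * Complex.I) - 1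
          - (t * Real.log x : ℝ) * Complex.I)
        + ((t * (Real.log x - (x - 1)) : ℝ) : ℂ) * Complex.I := by
    rw [Complex.cpow_def_of_ne_zero hx0, ← Complex.ofReal_log hx.le]
    push_cast
    ring_nf
  have h1 := cexp_taylor_aux (t * Real.log x)
  have h2 := log_sq_le_aux hx
  have h3 := Real.log_le_sub_one_of_pos hx
  have h4 := Real.one_sub_inv_le_log_of_pos hx
  have h5 : |Real.log x - (x - 1)| ≤ x - 2 + 1 / x := by
    rw [one_div, abs_le]; constructor <;> linarith
  rw [e]
  refine (norm_add_le _ _).trans ?_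
  have h6 : ‖((t * (Real.log x - (x - 1)) : ℝ) : ℂ) * Complex.I‖
      = |t| * |Real.log x - (x - 1)| := by
    rw [norm_mul, Complex.norm_I, mul_one, Complex.norm_real, Real.norm_eq_abs, abs_mul]
  rw [h6]
  have h7 := mul_le_mul_of_nonneg_left h5 (abs_nonneg t)
  have h8 := mul_le_mul_of_nonneg_left h2 (sq_nonneg t)
  nlinarith

/-! ### The normalized Gamma ratio -/

/-- `gammaRatio a b u = b^{-u} Γ(a+u)/Γ(a)`, the moment `E[(X/b)^u]` of a Gamma-distributed
random variable `X` of shape `a`. -/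
noncomputable def gammaRatio (a b : ℝ) (u : ℂ) : ℂ :=
  Complex.Gamma (a + u) / Complex.Gamma a * (b : ℂ) ^ (-u)

/-- Integrates `cpow_taylor_aux` at `x/b` against the Gamma density `e^{-x} x^{a-1}/Γ(a)`, whose
first and inverse first moments are `a` and `1/(a-1)`; the latter requires `1 < a`. -/
theorem gammaRatio_sub_one_le {a b : ℝ} (ha : 1 < a) (hb : 0 < b) (t : ℝ) :
    ‖gammaRatio a b (t * Complex.I) - 1‖ ≤
      |t| * |a / b - 1| + (|t| + 3 * t ^ 2) * (a / b - 2 + b / (a - 1)) := by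
  have ha0 : 0 < a := by linarith
  have ha1 : 0 < a - 1 := by linarith
  have hG : 0 < Real.Gamma a := Real.Gamma_pos_of_pos ha0
  have hG1 : Real.Gamma (a + 1) = a * Real.Gamma a := Real.Gamma_add_one ha0.ne'
  have hGm : Real.Gamma (a - 1) = Real.Gamma a / (a - 1) := by
    have := Real.Gamma_add_one ha1.ne'
    rw [sub_add_cancel] at this
    rw [this]; field_simp
  let w : ℝ → ℝ := fun x => Real.exp (-x) * x ^ (a - 1)
  have i0 : IntegrableOn w (Set.Ioi 0) := Real.GammaIntegral_convergent ha0
  have v0 : ∫ x in Set.Ioi 0, w x = Real.Gamma a := (Real.Gamma_eq_integral ha0).symm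
  have ep : Set.EqOn (fun x : ℝ => Real.exp (-x) * x ^ (a + 1 - 1)) (fun x => w x * x)
      (Set.Ioi 0) := by
    intro x hx
    have hx : 0 < x := hx
    simp only [w]
    rw [show a + 1 - 1 = (a - 1) + 1 by ring, Real.rpow_add_one hx.ne']; ring
  have em : Set.EqOn (fun x : ℝ => Real.exp (-x) * x ^ (a - 1 - 1)) (fun x => w x / x)
      (Set.Ioi 0) := by
    intro x hx
    have hx : 0 < x := hx
    simp only [w]
    rw [Real.rpow_sub_one hx.ne' (a - 1)]; ring
  have i1 : IntegrableOn (fun x => w x * x) (Set.Ioi 0) :=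
    (Real.GammaIntegral_convergent (by linarith : 0 < a + 1)).congr_fun ep measurableSet_Ioi
  have im : IntegrableOn (fun x => w x / x) (Set.Ioi 0) :=
    (Real.GammaIntegral_convergent ha1).congr_fun em measurableSet_Ioi
  have v1 : ∫ x in Set.Ioi 0, w x * x = a * Real.Gamma a := by
    rw [← hG1, Real.Gamma_eq_integral (by linarith : 0 < a + 1)]
    exact (setIntegral_congr_fun measurableSet_Ioi ep).symm
  have vm : ∫ x in Set.Ioi 0, w x / x = Real.Gamma a / (a - 1) := by
    rw [← hGm, Real.Gamma_eq_integral ha1]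
    exact (setIntegral_congr_fun measurableSet_Ioi em).symm
  have hre : 0 < ((a : ℂ) + t * Complex.I).re := by simpa using ha0
  have il : IntegrableOn (fun x => w x * (x / b - 1)) (Set.Ioi 0) := by
    refine IntegrableOn.congr_fun ((i1.div_const b).sub i0) (fun x _ => ?_) measurableSet_Ioi
    simp only [Pi.sub_apply]; ring
  have vl : ∫ x in Set.Ioi 0, w x * (x / b - 1) = Real.Gamma a * (a / b - 1) := by
    have : ∀ x, w x * (x / b - 1) = w x * x / b - w x := fun x => by ring
    simp_rw [this]
    rw [integral_sub (i1.div_const b) i0, integral_div, v1, v0]; ring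
  have i2 : IntegrableOn (fun x => w x * x / b - 2 * w x) (Set.Ioi 0) :=
    (i1.div_const b).sub (i0.const_mul 2)
  have ie : IntegrableOn (fun x => w x * (x / b - 2 + 1 / (x / b))) (Set.Ioi 0) := by
    refine IntegrableOn.congr_fun (i2.add (im.const_mul b)) (fun x _ => ?_) measurableSet_Ioi
    simp only [Pi.add_apply, one_div, inv_div]; ring
  have ve : ∫ x in Set.Ioi 0, w x * (x / b - 2 + 1 / (x / b)) =
      Real.Gamma a * (a / b - 2 + b / (a - 1)) := by
    have : ∀ x, w x * (x / b - 2 + 1 / (x / b)) = w x * x / b - 2 * w x + b * (w x / x) :=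
      fun x => by rw [one_div, inv_div]; ring
    simp_rw [this]
    rw [integral_add i2 (im.const_mul b),
      integral_sub (i1.div_const b) (i0.const_mul 2), integral_div, integral_const_mul,
      integral_const_mul, v1, v0, vm]; ring
  have hb0 : (b : ℂ) ≠ 0 := by exact_mod_cast hb.ne'
  have ec : Set.EqOn (fun x : ℝ => ((Real.exp (-x) : ℝ) : ℂ) *
        (x : ℂ) ^ ((a : ℂ) + t * Complex.I - 1) * (b : ℂ) ^ (-((t : ℂ) * Complex.I)))
      (fun x => (w x : ℂ) * ((x / b : ℝ) : ℂ) ^ ((t : ℂ) * Complex.I)) (Set.Ioi 0) := by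
    intro x hx
    have hx : 0 < x := hx
    have hx0 : (x : ℂ) ≠ 0 := by exact_mod_cast hx.ne'
    simp only [w]
    rw [show (a : ℂ) + t * Complex.I - 1 = ((a - 1 : ℝ) : ℂ) + t * Complex.I by push_cast; ring,
      Complex.cpow_add _ _ hx0, div_eq_mul_inv, Complex.ofReal_mul x,
      Complex.mul_cpow_ofReal_nonneg hx.le (inv_pos.2 hb).le, Complex.ofReal_mul,
      Complex.ofReal_cpow hx.le, Complex.cpow_neg, Complex.ofReal_inv, Complex.inv_cpow]
    · ring
    · rw [Complex.arg_ofReal_of_nonneg hb.le]; exact Real.pi_pos.ne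
  have ic : IntegrableOn (fun x => (w x : ℂ) * ((x / b : ℝ) : ℂ) ^ ((t : ℂ) * Complex.I))
      (Set.Ioi 0) :=
    IntegrableOn.congr_fun ((Complex.GammaIntegral_convergent hre).mul_const _) ec
      measurableSet_Ioi
  have vc : ∫ x in Set.Ioi 0, (w x : ℂ) * ((x / b : ℝ) : ℂ) ^ ((t : ℂ) * Complex.I) =
      Complex.Gamma (a + t * Complex.I) * (b : ℂ) ^ (-((t : ℂ) * Complex.I)) := by
    rw [← setIntegral_congr_fun measurableSet_Ioi ec, integral_mul_const,
      Complex.Gamma_eq_integral hre, Complex.GammaIntegral]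
  have i0c : IntegrableOn (fun x => (w x : ℂ)) (Set.Ioi 0) := i0.ofReal
  have v0c : ∫ x in Set.Ioi 0, (w x : ℂ) = (Real.Gamma a : ℂ) := by
    rw [integral_complex_ofReal, v0]
  have ilc : IntegrableOn (fun x => ((w x * (x / b - 1) : ℝ) : ℂ)) (Set.Ioi 0) := il.ofReal
  have vlc : ∫ x in Set.Ioi 0, ((w x * (x / b - 1) : ℝ) : ℂ) =
      ((Real.Gamma a * (a / b - 1) : ℝ) : ℂ) := by
    rw [integral_complex_ofReal, vl]
  have ic0 : IntegrableOn (fun x => (w x : ℂ) * ((x / b : ℝ) : ℂ) ^ ((t : ℂ) * Complex.I)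
      - (w x : ℂ)) (Set.Ioi 0) := ic.sub i0c
  have key : ∫ x in Set.Ioi 0, (w x : ℂ) * (((x / b : ℝ) : ℂ) ^ ((t : ℂ) * Complex.I) - 1
        - ((t * (x / b - 1) : ℝ) : ℂ) * Complex.I) =
      Complex.Gamma (a + t * Complex.I) * (b : ℂ) ^ (-((t : ℂ) * Complex.I)) - Real.Gamma a
        - ((Real.Gamma a * (a / b - 1) : ℝ) : ℂ) * (t * Complex.I) := by
    rw [← vc, ← v0c, ← vlc, ← integral_mul_const, ← integral_sub ic i0c,
      ← integral_sub ic0 (ilc.mul_const _)]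
    congr 1; ext x
    push_cast; ring
  have bound : ‖∫ x in Set.Ioi 0, (w x : ℂ) * (((x / b : ℝ) : ℂ) ^ ((t : ℂ) * Complex.I) - 1
        - ((t * (x / b - 1) : ℝ) : ℂ) * Complex.I)‖ ≤
      Real.Gamma a * ((|t| + 3 * t ^ 2) * (a / b - 2 + b / (a - 1))) := by
    have : Real.Gamma a * ((|t| + 3 * t ^ 2) * (a / b - 2 + b / (a - 1))) =
        ∫ x in Set.Ioi 0, (|t| + 3 * t ^ 2) * (w x * (x / b - 2 + 1 / (x / b))) := by
      rw [integral_const_mul, ve]; ring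
    rw [this]
    refine norm_integral_le_of_norm_le (ie.const_mul _) ?_
    refine (ae_restrict_iff' measurableSet_Ioi).2 (Filter.Eventually.of_forall fun x hx => ?_)
    have hx : 0 < x := hx
    have hw : 0 ≤ w x := by positivity
    rw [norm_mul, Complex.norm_real, Real.norm_of_nonneg hw]
    calc _ ≤ w x * ((|t| + 3 * t ^ 2) * (x / b - 2 + 1 / (x / b))) :=
          mul_le_mul_of_nonneg_left (cpow_taylor_aux (div_pos hx hb) t) hw
      _ = _ := by ring
  have hGc : (Real.Gamma a : ℂ) ≠ 0 := by exact_mod_cast hG.ne'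
  have e : gammaRatio a b (t * Complex.I) - 1 =
      (∫ x in Set.Ioi 0, (w x : ℂ) * (((x / b : ℝ) : ℂ) ^ ((t : ℂ) * Complex.I) - 1
        - ((t * (x / b - 1) : ℝ) : ℂ) * Complex.I)) / Real.Gamma a
      + ((t * (a / b - 1) : ℝ) : ℂ) * Complex.I := by
    rw [key, gammaRatio, Complex.Gamma_ofReal]
    push_cast
    field_simp
    ring
  rw [e, add_comm]
  refine (norm_add_le _ _).trans (add_le_add ?_ ?_)
  · rw [norm_mul, Complex.norm_I, mul_one, Complex.norm_real, Real.norm_eq_abs, abs_mul]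
  · rw [norm_div, Complex.norm_real, Real.norm_of_nonneg hG.le, div_le_iff₀ hG]
    linarith

theorem norm_Gamma_le_aux {s : ℂ} (hs : 0 < s.re) : ‖Complex.Gamma s‖ ≤ Real.Gamma s.re := by
  rw [Complex.Gamma_eq_integral hs, Real.Gamma_eq_integral hs, Complex.GammaIntegral]
  refine norm_integral_le_of_norm_le (Real.GammaIntegral_convergent hs) ?_
  refine (ae_restrict_iff' measurableSet_Ioi).2 (Filter.Eventually.of_forall fun x hx => ?_)
  rw [norm_mul, Complex.norm_real, Real.norm_of_nonneg (Real.exp_pos _).le,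
    Complex.norm_cpow_eq_rpow_re_of_pos hx]
  simp

/-! ### Moving the contour -/

theorem integrable_line_aux {F : ℂ → ℂ} {σ B : ℝ}
    (hc : Continuous fun t : ℝ => F (σ + t * Complex.I))
    (hB : ∀ t : ℝ, 1 ≤ |t| → ‖F (σ + t * Complex.I)‖ ≤ B * Real.exp (-t ^ 2)) :
    Integrable fun t : ℝ => F (σ + t * Complex.I) := by
  have hg : Integrable fun t : ℝ => Real.exp (-t ^ 2) := by
    simpa using integrable_exp_neg_mul_sq (b := 1) one_pos
  have hO : ∀ t : ℝ, 1 ≤ |t| → ‖F (σ + t * Complex.I)‖ ≤ B * ‖Real.exp (-t ^ 2)‖ := by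
    intro t ht
    rw [Real.norm_of_nonneg (Real.exp_pos _).le]
    exact hB t ht
  refine hc.locallyIntegrable.integrable_of_isBigO_atBot_atTop (g := fun t => Real.exp (-t ^ 2))
    (g' := fun t => Real.exp (-t ^ 2))
    (Asymptotics.IsBigO.of_bound B ?_) (hg.integrableAtFilter _)
    (Asymptotics.IsBigO.of_bound B ?_) (hg.integrableAtFilter _)
  · filter_upwards [Filter.eventually_le_atBot (-1)] with t ht
    exact hO t (by rw [abs_of_nonpos (by linarith)]; linarith)
  · filter_upwards [Filter.eventually_ge_atTop 1] with t ht
    exact hO t (by rw [abs_of_nonneg (by linarith)]; exact ht)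

/-- Cauchy's theorem on the rectangles `[0,3] × [-T,T]`, whose horizontal sides contribute
`O(e^{-T²})`. The decay is only required for `|t| ≥ 1`, so that a factor `1/u` is harmless in
verifying it. -/
theorem vertical_shift_aux {F : ℂ → ℂ} {B : ℝ} (hd : DifferentiableOn ℂ F {u | -1 < u.re})
    (hB : ∀ σ t : ℝ, 0 ≤ σ → σ ≤ 3 → 1 ≤ |t| →
      ‖F (σ + t * Complex.I)‖ ≤ B * Real.exp (-t ^ 2)) :
    ∫ t : ℝ, F (3 + t * Complex.I) = ∫ t : ℝ, F (t * Complex.I) := by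
  have hcont : ∀ σ : ℝ, 0 ≤ σ → Continuous fun t : ℝ => F (σ + t * Complex.I) := by
    intro σ hσ
    refine hd.continuousOn.comp_continuous (by fun_prop) (fun t => ?_)
    simp only [Set.mem_ofPred_eq, Complex.add_re, Complex.ofReal_re, Complex.mul_re,
      Complex.I_re, Complex.ofReal_im, Complex.I_im]
    linarith
  have i3 := integrable_line_aux (hcont 3 (by norm_num)) (fun t => hB 3 t (by norm_num) le_rfl)
  have i0 := integrable_line_aux (hcont 0 le_rfl) (fun t => hB 0 t le_rfl (by norm_num))
  have l3 := intervalIntegral_tendsto_integral i3 Filter.tendsto_neg_atTop_atBot Filter.tendsto_id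
  have l0 := intervalIntegral_tendsto_integral i0 Filter.tendsto_neg_atTop_atBot Filter.tendsto_id
  have rect : ∀ T : ℝ, (∫ x : ℝ in (0 : ℝ)..3, F (x + (-T : ℝ) * Complex.I)) -
      (∫ x : ℝ in (0 : ℝ)..3, F (x + T * Complex.I)) +
      Complex.I • (∫ y : ℝ in (-T)..T, F ((3 : ℝ) + y * Complex.I)) -
      Complex.I • (∫ y : ℝ in (-T)..T, F ((0 : ℝ) + y * Complex.I)) = 0 := by
    intro T
    have := Complex.integral_boundary_rect_eq_zero_of_differentiableOn F
      (⟨0, -T⟩ : ℂ) (⟨3, T⟩ : ℂ) (hd.mono ?_)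
    · simpa using this
    · intro u hu
      have h := hu.1
      simp only [Set.mem_preimage] at h
      rw [Set.uIcc_of_le (by norm_num)] at h
      have := h.1
      simp only [Set.mem_ofPred_eq]
      linarith
  have hor : ∀ T : ℝ, 1 ≤ |T| →
      ‖∫ x : ℝ in (0 : ℝ)..3, F (x + T * Complex.I)‖ ≤ B * Real.exp (-T ^ 2) * 3 := by
    intro T hT
    have := intervalIntegral.norm_integral_le_of_norm_le_const (a := (0 : ℝ)) (b := 3)
      (f := fun x : ℝ => F (x + T * Complex.I)) (C := B * Real.exp (-T ^ 2)) ?_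
    · simpa using this
    · intro x hx
      rw [Set.uIoc_of_le (by norm_num)] at hx
      exact hB x T hx.1.le hx.2 hT
  have lim0 : Filter.Tendsto (fun T : ℝ => 2 * (B * Real.exp (-T ^ 2) * 3)) Filter.atTop
      (nhds 0) := by
    have h1 : Filter.Tendsto (fun T : ℝ => Real.exp (-T ^ 2)) Filter.atTop (nhds 0) :=
      Real.tendsto_exp_atBot.comp
        (Filter.tendsto_neg_atTop_atBot.comp (Filter.tendsto_pow_atTop two_ne_zero))
    simpa using ((h1.const_mul B).mul_const 3).const_mul 2
  have ld : Filter.Tendsto (fun T : ℝ => (∫ y : ℝ in (-T)..T, F ((3 : ℝ) + y * Complex.I)) -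
      ∫ y : ℝ in (-T)..T, F ((0 : ℝ) + y * Complex.I)) Filter.atTop (nhds 0) := by
    refine squeeze_zero_norm' ?_ lim0
    filter_upwards [Filter.eventually_ge_atTop 1] with T hT
    have hT' : 1 ≤ |T| := by rw [abs_of_nonneg (by linarith)]; exact hT
    have h1 := hor T hT'
    have h2 := hor (-T) (by rwa [abs_neg])
    rw [neg_sq] at h2
    have h3 := rect T
    set A := ∫ y : ℝ in (-T)..T, F ((3 : ℝ) + y * Complex.I)
    set A' := ∫ y : ℝ in (-T)..T, F ((0 : ℝ) + y * Complex.I)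
    set P := ∫ x : ℝ in (0 : ℝ)..3, F (x + (-T : ℝ) * Complex.I)
    set Q := ∫ x : ℝ in (0 : ℝ)..3, F (x + T * Complex.I)
    have h4 : Complex.I * (A - A') = Q - P := by
      simp only [smul_eq_mul] at h3
      linear_combination h3
    have h5 : ‖A - A'‖ = ‖Q - P‖ := by
      rw [← h4, norm_mul, Complex.norm_I, one_mul]
    rw [h5]
    refine (norm_sub_le _ _).trans ?_
    linarith
  have := tendsto_nhds_unique ld (l3.sub l0)
  have := sub_eq_zero.1 this.symm
  simpa using this

/-! ### Bounds in the strip `0 ≤ Re u ≤ 3` and on the imaginary axis -/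

theorem norm_cexp_sq_le {σ t : ℝ} (h0 : 0 ≤ σ) (h3 : σ ≤ 3) :
    ‖Complex.exp ((σ + t * Complex.I) ^ 2)‖ ≤ Real.exp 9 * Real.exp (-t ^ 2) := by
  rw [Complex.norm_exp, ← Real.exp_add]
  apply Real.exp_le_exp.2
  have : (((σ : ℂ) + t * Complex.I) ^ 2).re = σ ^ 2 - t ^ 2 := by
    simp [pow_two]
  rw [this]
  nlinarith

theorem cpow_strip_bound {z : ℝ} (hz : 0 < z) :
    ∃ M, 0 ≤ M ∧ ∀ u : ℂ, 0 ≤ u.re → u.re ≤ 3 → ‖(z : ℂ) ^ (-u)‖ ≤ M := by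
  obtain ⟨M, hM⟩ := isCompact_Icc.exists_bound_of_continuousOn (s := Set.Icc (0 : ℝ) 3)
    (f := fun σ : ℝ => z ^ (-σ))
    (Continuous.continuousOn (by
      exact Continuous.rpow continuous_const continuous_neg (fun _ => Or.inl hz.ne')))
  refine ⟨M, (norm_nonneg _).trans (hM 0 (by simp)), fun u h0 h3 => ?_⟩
  rw [Complex.norm_cpow_eq_rpow_re_of_pos hz]
  exact (le_abs_self _).trans (hM u.re ⟨h0, h3⟩)

theorem gammaRatio_strip_bound {a b : ℝ} (ha : 0 < a) (hb : 0 < b) :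
    ∃ M, 0 ≤ M ∧ ∀ u : ℂ, 0 ≤ u.re → u.re ≤ 3 → ‖gammaRatio a b u‖ ≤ M := by
  obtain ⟨M₁, hM₁, h₁⟩ := cpow_strip_bound hb
  obtain ⟨M, hM⟩ := isCompact_Icc.exists_bound_of_continuousOn (s := Set.Icc (0 : ℝ) 3)
    (f := fun σ : ℝ => Real.Gamma (a + σ)) (by
      refine Real.differentiableOn_Gamma_Ioi.continuousOn.comp (by fun_prop) ?_
      intro σ hσ
      have := hσ.1
      simp only [Set.mem_Ioi]; linarith)
  have hM0 : 0 ≤ M := (norm_nonneg _).trans (hM 0 (by simp))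
  refine ⟨M / ‖Complex.Gamma a‖ * M₁, by positivity, fun u h0 h3 => ?_⟩
  rw [gammaRatio, norm_mul, norm_div]
  have h2 : ‖Complex.Gamma (a + u)‖ ≤ M := by
    refine (norm_Gamma_le_aux (by simp; linarith)).trans ?_
    have := hM u.re ⟨h0, h3⟩
    simpa using (le_abs_self _).trans this
  have := h₁ u h0 h3
  gcongr

theorem gammaRatio_differentiableAt {a b : ℝ} (ha : 1 < a) (hb : 0 < b) {u : ℂ}
    (hu : -1 < u.re) : DifferentiableAt ℂ (gammaRatio a b) u := by
  unfold gammaRatio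
  have hG : DifferentiableAt ℂ (fun u : ℂ => Complex.Gamma (a + u)) u := by
    refine DifferentiableAt.comp u (Complex.differentiableAt_Gamma _ fun m h => ?_) (by fun_prop)
    have := congrArg Complex.re h
    simp at this
    have hm : (0 : ℝ) ≤ m := Nat.cast_nonneg m
    linarith
  have hb0 : (b : ℂ) ≠ 0 := by exact_mod_cast hb.ne'
  exact (hG.div_const _).mul (differentiableAt_id.neg.const_cpow (Or.inl hb0))

theorem gammaRatio_zero {a b : ℝ} (ha : 0 < a) : gammaRatio a b 0 = 1 := by
  have : Complex.Gamma a ≠ 0 := Complex.Gamma_ne_zero_of_re_pos (by simpa using ha)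
  simp [gammaRatio, this]

theorem norm_gammaRatio_le_one {a b : ℝ} (ha : 0 < a) (hb : 0 < b) (t : ℝ) :
    ‖gammaRatio a b (t * Complex.I)‖ ≤ 1 := by
  have h := norm_Gamma_le_aux (s := (a : ℂ) + t * Complex.I) (by simpa using ha)
  have hG := Real.Gamma_pos_of_pos ha
  rw [gammaRatio, norm_mul, Complex.norm_cpow_eq_rpow_re_of_pos hb, norm_div,
    Complex.Gamma_ofReal, Complex.norm_real, Real.norm_of_nonneg hG.le]
  simp only [Complex.add_re, Complex.ofReal_re, Complex.mul_re, Complex.I_re, mul_zero,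
    Complex.ofReal_im, Complex.I_im, mul_one, sub_self, add_zero, Complex.neg_re, neg_zero,
    Real.rpow_zero] at h ⊢
  rw [div_le_one hG]
  exact h

theorem integrable_weight_aux :
    Integrable fun t : ℝ => Real.exp (-t ^ 2) * (1 + 3 * |t|) := by
  have hg : Integrable fun t : ℝ => Real.exp (-t ^ 2) := by
    simpa using integrable_exp_neg_mul_sq (b := 1) one_pos
  have h1 : Integrable fun t : ℝ => |t * Real.exp (-t ^ 2)| := by
    simpa using (integrable_mul_exp_neg_mul_sq (b := 1) one_pos).abs
  refine (hg.add (h1.const_mul 3)).congr (Filter.Eventually.of_forall fun t => ?_)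
  simp only [Pi.add_apply, abs_mul, abs_of_pos (Real.exp_pos _)]
  ring

/-! ### The difference of the two integrals -/

/-- The two integrals over `Re u = 3` differ by an integral over `Re u = 0`, where
`|Z^{-u}| = 1`; hence the bound does not depend on `Z`. -/
theorem smoothed_difference_le {a₁ a₂ b Z D : ℝ} (h₁ : 1 < a₁) (h₂ : 1 < a₂) (hb : 0 < b)
    (hZ : 0 < Z)
    (e₁ : ∀ t : ℝ, ‖gammaRatio a₁ b (t * Complex.I) - 1‖ ≤ D * (|t| + 3 * t ^ 2))
    (e₂ : ∀ t : ℝ, ‖gammaRatio a₂ b (t * Complex.I) - 1‖ ≤ D * (|t| + 3 * t ^ 2)) :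
    ‖(∫ t : ℝ, Complex.exp ((3 + t * Complex.I) ^ 2) * (Z : ℂ) ^ (-(3 + t * Complex.I)) *
        (gammaRatio a₁ b (3 + t * Complex.I) * gammaRatio a₂ b (3 + t * Complex.I)) /
          (3 + t * Complex.I)) -
      ∫ t : ℝ, Complex.exp ((3 + t * Complex.I) ^ 2) * (Z : ℂ) ^ (-(3 + t * Complex.I)) /
          (3 + t * Complex.I)‖ ≤
      2 * D * ∫ t : ℝ, Real.exp (-t ^ 2) * (1 + 3 * |t|) := by
  have hZ0 : (Z : ℂ) ≠ 0 := by exact_mod_cast hZ.ne'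
  obtain ⟨M₁, hM₁, b₁⟩ := gammaRatio_strip_bound (a := a₁) (b := b) (by linarith) hb
  obtain ⟨M₂, hM₂, b₂⟩ := gammaRatio_strip_bound (a := a₂) (b := b) (by linarith) hb
  obtain ⟨M, hM, bZ⟩ := cpow_strip_bound hZ
  let K : ℂ → ℂ := fun u => Complex.exp (u ^ 2) * (Z : ℂ) ^ (-u)
  let G : ℂ → ℂ := fun u => gammaRatio a₁ b u * gammaRatio a₂ b u
  have dK : Differentiable ℂ K := fun u =>
    (by fun_prop : DifferentiableAt ℂ (fun u : ℂ => Complex.exp (u ^ 2)) u).mul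
      (differentiableAt_id.neg.const_cpow (Or.inl hZ0))
  have dG : ∀ u : ℂ, -1 < u.re → DifferentiableAt ℂ G u := fun u hu =>
    (gammaRatio_differentiableAt h₁ hb hu).mul (gammaRatio_differentiableAt h₂ hb hu)
  have reσ : ∀ σ t : ℝ, ((σ : ℂ) + t * Complex.I).re = σ := by intro σ t; simp
  have imσ : ∀ σ t : ℝ, ((σ : ℂ) + t * Complex.I).im = t := by intro σ t; simp
  have bK : ∀ σ t : ℝ, 0 ≤ σ → σ ≤ 3 →
      ‖K (σ + t * Complex.I)‖ ≤ Real.exp 9 * Real.exp (-t ^ 2) * M := by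
    intro σ t h0 h3
    rw [norm_mul]
    exact mul_le_mul (norm_cexp_sq_le h0 h3) (bZ _ (by rwa [reσ]) (by rwa [reσ]))
      (norm_nonneg _) (by positivity)
  have bG : ∀ σ t : ℝ, 0 ≤ σ → σ ≤ 3 → ‖G (σ + t * Complex.I)‖ ≤ M₁ * M₂ := by
    intro σ t h0 h3
    rw [norm_mul]
    exact mul_le_mul (b₁ _ (by rwa [reσ]) (by rwa [reσ])) (b₂ _ (by rwa [reσ]) (by rwa [reσ]))
      (norm_nonneg _) hM₁
  have one_le : ∀ σ t : ℝ, 1 ≤ |t| → 1 ≤ ‖(σ : ℂ) + t * Complex.I‖ := by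
    intro σ t ht
    have := Complex.abs_im_le_norm ((σ : ℂ) + t * Complex.I)
    rw [imσ] at this
    exact ht.trans this
  have ne0 : ∀ t : ℝ, ((3 : ℝ) : ℂ) + t * Complex.I ≠ 0 := by
    intro t h
    have := congrArg Complex.re h
    rw [reσ] at this
    norm_num at this
  have line : Continuous fun t : ℝ => ((3 : ℝ) : ℂ) + t * Complex.I := by fun_prop
  have cK : Continuous fun t : ℝ => K ((3 : ℝ) + t * Complex.I) := dK.continuous.comp line
  have cG : Continuous fun t : ℝ => G ((3 : ℝ) + t * Complex.I) :=
    continuous_iff_continuousAt.2 fun t =>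
      ContinuousAt.comp (g := G) (dG _ (by rw [reσ]; norm_num)).continuousAt line.continuousAt
  have i₁ : Integrable fun t : ℝ =>
      (fun u => K u * G u / u) ((3 : ℝ) + t * Complex.I) := by
    refine integrable_line_aux (F := fun u => K u * G u / u) (σ := 3)
      (B := Real.exp 9 * M * (M₁ * M₂))
      ((cK.mul cG).div line ne0) fun t ht => ?_
    rw [norm_div, norm_mul]
    refine (div_le_self (by positivity) (one_le _ t ht)).trans ?_
    refine (mul_le_mul (bK 3 t (by norm_num) le_rfl) (bG 3 t (by norm_num) le_rfl)
      (norm_nonneg _) (by positivity)).trans (le_of_eq (by ring))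
  have i₂ : Integrable fun t : ℝ => (fun u => K u / u) ((3 : ℝ) + t * Complex.I) := by
    refine integrable_line_aux (F := fun u => K u / u) (σ := 3) (B := Real.exp 9 * M)
      (cK.div line ne0) fun t ht => ?_
    rw [norm_div]
    refine (div_le_self (by positivity) (one_le _ t ht)).trans ?_
    exact (bK 3 t (by norm_num) le_rfl).trans (le_of_eq (by ring))
  -- `dslope N 0` is `N u / u` with the removable singularity at `0` filled in
  let N : ℂ → ℂ := fun u => K u * (G u - 1)
  have N0 : N 0 = 0 := by
    simp [N, G, gammaRatio_zero (b := b) (by linarith : 0 < a₁),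
      gammaRatio_zero (b := b) (by linarith : 0 < a₂)]
  have F_eq : ∀ u : ℂ, u ≠ 0 → dslope N 0 u = N u / u := by
    intro u hu
    rw [dslope_of_ne _ hu, slope_def_field, N0]; simp
  have dN : DifferentiableOn ℂ N {u | -1 < u.re} := fun u hu =>
    ((dK u).mul ((dG u hu).sub_const 1)).differentiableWithinAt
  have hop : {u : ℂ | -1 < u.re} ∈ nhds (0 : ℂ) :=
    (isOpen_lt continuous_const Complex.continuous_re).mem_nhds (by simp)
  have dF : DifferentiableOn ℂ (dslope N 0) {u | -1 < u.re} :=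
    (Complex.differentiableOn_dslope hop).2 dN
  have shift := vertical_shift_aux (B := Real.exp 9 * M * (M₁ * M₂ + 1)) dF (by
    intro σ t h0 h3 ht
    have hn := one_le σ t ht
    have hu : (σ : ℂ) + t * Complex.I ≠ 0 := by
      intro h; rw [h, norm_zero] at hn; linarith
    rw [F_eq _ hu, norm_div]
    refine (div_le_self (by positivity) hn).trans ?_
    have hG1 : ‖G (σ + t * Complex.I) - 1‖ ≤ M₁ * M₂ + 1 :=
      (norm_sub_le _ _).trans (by rw [norm_one]; linarith [bG σ t h0 h3])
    rw [norm_mul]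
    exact (mul_le_mul (bK σ t h0 h3) hG1 (norm_nonneg _) (by positivity)).trans
      (le_of_eq (by ring)))
  have e : (∫ t : ℝ, K (3 + t * Complex.I) * G (3 + t * Complex.I) / (3 + t * Complex.I)) -
      (∫ t : ℝ, K (3 + t * Complex.I) / (3 + t * Complex.I)) =
      ∫ t : ℝ, dslope N 0 (t * Complex.I) := by
    rw [← shift]
    simp only [Complex.ofReal_ofNat] at i₁ i₂
    rw [← integral_sub i₁ i₂]
    congr 1; ext t
    have := ne0 t
    simp only [Complex.ofReal_ofNat] at this
    rw [F_eq _ this]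
    simp only [N]
    ring
  change ‖(∫ t : ℝ, K (3 + t * Complex.I) * G (3 + t * Complex.I) / (3 + t * Complex.I)) -
      (∫ t : ℝ, K (3 + t * Complex.I) / (3 + t * Complex.I))‖ ≤ _
  rw [e, ← integral_const_mul]
  refine norm_integral_le_of_norm_le (integrable_weight_aux.const_mul _) ?_
  have hae : ∀ᵐ t : ℝ, t ≠ 0 := by simp [ae_iff]
  filter_upwards [hae] with t ht
  have hu : (t : ℂ) * Complex.I ≠ 0 := by simp [ht]
  have htp : 0 < |t| := abs_pos.2 ht
  have nK : ‖K (t * Complex.I)‖ = Real.exp (-t ^ 2) := by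
    rw [norm_mul, Complex.norm_cpow_eq_rpow_re_of_pos hZ, Complex.norm_exp]
    simp [mul_pow, ← Complex.ofReal_pow]
  have nG : ‖G (t * Complex.I) - 1‖ ≤ 2 * D * (|t| + 3 * t ^ 2) := by
    have : G (t * Complex.I) - 1 = (gammaRatio a₁ b (t * Complex.I) - 1) *
        gammaRatio a₂ b (t * Complex.I) + (gammaRatio a₂ b (t * Complex.I) - 1) := by
      simp only [G]; ring
    rw [this]
    refine (norm_add_le _ _).trans ?_
    rw [norm_mul]
    have n2 := norm_gammaRatio_le_one (by linarith : 0 < a₂) hb t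
    have := mul_le_of_le_one_right (norm_nonneg (gammaRatio a₁ b (t * Complex.I) - 1)) n2
    linarith [e₁ t, e₂ t]
  rw [F_eq _ hu, norm_div, norm_mul, nK, norm_mul, Complex.norm_I, mul_one, Complex.norm_real,
    Real.norm_eq_abs, div_le_iff₀ htp]
  have := mul_le_mul_of_nonneg_left nG (Real.exp_pos (-t ^ 2)).le
  refine this.trans (le_of_eq ?_)
  rw [← sq_abs t]
  ring

/-! ### Specialization to the weight `k` -/

/-- The hypotheses on `a` hold for both `(k+ℓ-1)/2` and `(k-ℓ+1)/2` once `k ≥ 2ℓ + 6`. -/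
theorem gammaRatio_rate {ℓ k : ℕ} {a : ℝ} (hk : 2 * ℓ + 6 ≤ k)
    (hlo : ((k : ℝ) - ℓ - 1) / 2 ≤ a) (hhi : a ≤ ((k : ℝ) + ℓ + 1) / 2)
    (hm : (k : ℝ) / 4 ≤ a - 1) (t : ℝ) :
    ‖gammaRatio a ((k : ℝ) / 2) (t * Complex.I) - 1‖ ≤
      (4 * ℓ + 8) / k * (|t| + 3 * t ^ 2) := by
  have hk' : (2 * ℓ + 6 : ℝ) ≤ k := by exact_mod_cast hk
  have hℓ : (0 : ℝ) ≤ ℓ := Nat.cast_nonneg ℓ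
  have hk0 : (0 : ℝ) < k := by linarith
  have ha : 0 < a - 1 := by linarith
  refine (gammaRatio_sub_one_le (by linarith) (by linarith) t).trans ?_
  have r1 : a / ((k : ℝ) / 2) - 1 ≤ (ℓ + 1) / k := by
    rw [sub_le_iff_le_add, div_le_iff₀ (by linarith), add_mul]
    field_simp
    linarith
  have r2 : -((ℓ + 1) / k) ≤ a / ((k : ℝ) / 2) - 1 := by
    rw [le_sub_iff_add_le, le_div_iff₀ (by linarith), add_mul]
    field_simp
    linarith
  have r3 : (k : ℝ) / 2 / (a - 1) - 1 ≤ (2 * ℓ + 6) / k := by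
    rw [sub_le_iff_le_add, div_le_iff₀ ha]
    have : (2 * ℓ + 6) / (k : ℝ) * (k / 4) ≤ (2 * ℓ + 6) / k * (a - 1) := by gcongr
    have h : (2 * ℓ + 6) / (k : ℝ) * (k / 4) = (2 * ℓ + 6) / 4 := by field_simp
    linarith
  have r4 : |a / ((k : ℝ) / 2) - 1| ≤ (ℓ + 1) / k := abs_le.2 ⟨r2, r1⟩
  have hs : (4 * ℓ + 8) / (k : ℝ) = (ℓ + 1) / k + ((ℓ + 1) / k + (2 * ℓ + 6) / k) := by
    field_simp; ring
  have m1 : |t| * |a / ((k : ℝ) / 2) - 1| ≤ (|t| + 3 * t ^ 2) * ((ℓ + 1) / k) := by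
    gcongr
    nlinarith [sq_nonneg t]
  have m2 : (|t| + 3 * t ^ 2) * (a / ((k : ℝ) / 2) - 2 + (k : ℝ) / 2 / (a - 1)) ≤
      (|t| + 3 * t ^ 2) * ((ℓ + 1) / k + (2 * ℓ + 6) / k) :=
    mul_le_mul_of_nonneg_left (by linarith) (by positivity)
  rw [hs]
  linarith

/-- For `b = k/2` the base on the right is `16π² y/k²`. -/
theorem cpow_scale_aux {y b : ℝ} (hy : 0 < y) (hb : 0 < b) (u : ℂ) :
    (y : ℂ) ^ (-u) * (2 * (Real.pi : ℂ)) ^ (-(2 * u)) =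
      ((y / (2 * b) ^ 2 * (16 * Real.pi ^ 2) : ℝ) : ℂ) ^ (-u) *
        ((b : ℂ) ^ (-u) * (b : ℂ) ^ (-u)) := by
  have hπ := Real.pi_pos
  have hZ : 0 < y / (2 * b) ^ 2 * (16 * Real.pi ^ 2) := by positivity
  have h2 : 0 < 2 * Real.pi := by positivity
  have hlog : Real.log (y / (2 * b) ^ 2 * (16 * Real.pi ^ 2)) =
      Real.log y + 2 * Real.log (2 * Real.pi) - 2 * Real.log b := by
    have : y / (2 * b) ^ 2 * (16 * Real.pi ^ 2) = y * (2 * Real.pi) ^ 2 / b ^ 2 := by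
      field_simp; ring
    rw [this, Real.log_div (by positivity) (by positivity),
      Real.log_mul (by positivity) (by positivity), Real.log_pow, Real.log_pow]
    push_cast; ring
  have e2 : (2 * (Real.pi : ℂ)) = ((2 * Real.pi : ℝ) : ℂ) := by push_cast; ring
  have ne : ∀ {x : ℝ}, 0 < x → (x : ℂ) ≠ 0 := fun h => by exact_mod_cast h.ne'
  rw [e2, Complex.cpow_def_of_ne_zero (ne hy), Complex.cpow_def_of_ne_zero (ne h2),
    Complex.cpow_def_of_ne_zero (ne hZ), Complex.cpow_def_of_ne_zero (ne hb),
    ← Complex.ofReal_log hy.le, ← Complex.ofReal_log h2.le, ← Complex.ofReal_log hZ.le,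
    ← Complex.ofReal_log hb.le, hlog, ← Complex.exp_add, ← Complex.exp_add, ← Complex.exp_add]
  congr 1
  push_cast
  ring

theorem gammaFac_ratio {ℓ k : ℕ} {y : ℝ} (hk : 2 * ℓ + 6 ≤ k) (hy : 0 < y) (u : ℂ) :
    (y : ℂ) ^ (-u) * (gammaFac ℓ (k : ℤ) (1 / 2 + u) / gammaFac ℓ (k : ℤ) (1 / 2)) =
      ((y / (k : ℝ) ^ 2 * (16 * Real.pi ^ 2) : ℝ) : ℂ) ^ (-u) *
        (gammaRatio (((k : ℝ) + ℓ - 1) / 2) ((k : ℝ) / 2) u *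
          gammaRatio (((k : ℝ) - ℓ + 1) / 2) ((k : ℝ) / 2) u) := by
  have hk' : (2 * ℓ + 6 : ℝ) ≤ k := by exact_mod_cast hk
  have hℓ : (0 : ℝ) ≤ ℓ := Nat.cast_nonneg ℓ
  have hs := cpow_scale_aux hy (by linarith : 0 < (k : ℝ) / 2) u
  rw [mul_div_cancel₀ _ (two_ne_zero)] at hs
  have h2π : (2 * (Real.pi : ℂ)) ≠ 0 := by
    simp [Real.pi_pos.ne']
  have hp : (2 * (Real.pi : ℂ)) ^ (-(2 * (1 / 2 + u))) =
      (2 * (Real.pi : ℂ)) ^ (-(2 * u)) * (2 * (Real.pi : ℂ)) ^ (-(2 * (1 / 2) : ℂ)) := by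
    rw [← Complex.cpow_add _ _ h2π]; congr 1; ring
  have hp0 : (2 * (Real.pi : ℂ)) ^ (-(2 * (1 / 2) : ℂ)) ≠ 0 := by
    simp [Complex.cpow_eq_zero_iff, h2π]
  unfold gammaFac gammaRatio
  rw [hp]
  have E1 : 1 / 2 + u + (((k : ℤ) : ℂ) + ℓ) / 2 - 1 = ((((k : ℝ) + ℓ - 1) / 2 : ℝ) : ℂ) + u := by
    push_cast; ring
  have E2 : 1 / 2 + u + (((k : ℤ) : ℂ) - ℓ) / 2 = ((((k : ℝ) - ℓ + 1) / 2 : ℝ) : ℂ) + u := by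
    push_cast; ring
  have E3 : 1 / 2 + (((k : ℤ) : ℂ) + ℓ) / 2 - 1 = ((((k : ℝ) + ℓ - 1) / 2 : ℝ) : ℂ) := by
    push_cast; ring
  have E4 : 1 / 2 + (((k : ℤ) : ℂ) - ℓ) / 2 = ((((k : ℝ) - ℓ + 1) / 2 : ℝ) : ℂ) := by
    push_cast; ring
  rw [E1, E2, E3, E4]
  have g1 : Complex.Gamma ((((k : ℝ) + ℓ - 1) / 2 : ℝ) : ℂ) ≠ 0 :=
    Complex.Gamma_ne_zero_of_re_pos (by rw [Complex.ofReal_re]; linarith)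
  have g2 : Complex.Gamma ((((k : ℝ) - ℓ + 1) / 2 : ℝ) : ℂ) ≠ 0 :=
    Complex.Gamma_ne_zero_of_re_pos (by rw [Complex.ofReal_re]; linarith)
  generalize Complex.Gamma ((((k : ℝ) + ℓ - 1) / 2 : ℝ) : ℂ) = x1 at *
  generalize Complex.Gamma ((((k : ℝ) - ℓ + 1) / 2 : ℝ) : ℂ) = x2 at *
  generalize Complex.Gamma (((((k : ℝ) + ℓ - 1) / 2 : ℝ) : ℂ) + u) = z1 at *
  generalize Complex.Gamma (((((k : ℝ) - ℓ + 1) / 2 : ℝ) : ℂ) + u) = z2 at *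
  generalize (2 * (Real.pi : ℂ)) ^ (-(2 * (1 / 2) : ℂ)) = p at *
  generalize (2 * (Real.pi : ℂ)) ^ (-(2 * u)) = q at *
  generalize ((y / (k : ℝ) ^ 2 * (16 * Real.pi ^ 2) : ℝ) : ℂ) ^ (-u) = r at *
  generalize (((k : ℝ) / 2 : ℝ) : ℂ) ^ (-u) = v at *
  have : (y : ℂ) ^ (-u) * (q * p * z1 * z2 / (p * x1 * x2)) =
      (y : ℂ) ^ (-u) * q * (z1 / x1) * (z2 / x2) := by
    field_simp
  rw [this, hs]
  ring

theorem U_approximation (ℓ : ℕ) :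
    ∃ C > 0, ∃ k₀ : ℕ, ∀ k : ℕ, Even k → k₀ ≤ k → ∀ y : ℝ, 1 ≤ y → y ≤ (k : ℝ) ^ 2 →
      ‖Ufun ℓ y (k : ℤ) - U1 (y / (k : ℝ) ^ 2)‖ ≤ C / k := by
  set J : ℝ := ∫ t : ℝ, Real.exp (-t ^ 2) * (1 + 3 * |t|) with hJ
  have hJ0 : 0 ≤ J := integral_nonneg fun t => by positivity
  refine ⟨1 / (2 * Real.pi) * (2 * (4 * ℓ + 8) * J) + 1, by positivity, 2 * ℓ + 6, ?_⟩
  intro k _ hk y hy _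
  have hk' : (2 * ℓ + 6 : ℝ) ≤ k := by exact_mod_cast hk
  have hℓ : (0 : ℝ) ≤ ℓ := Nat.cast_nonneg ℓ
  have hk0 : (0 : ℝ) < k := by linarith
  have hy0 : 0 < y := by linarith
  have hπ := Real.pi_pos
  have main := smoothed_difference_le (a₁ := ((k : ℝ) + ℓ - 1) / 2)
    (a₂ := ((k : ℝ) - ℓ + 1) / 2) (b := (k : ℝ) / 2)
    (Z := y / (k : ℝ) ^ 2 * (16 * Real.pi ^ 2)) (by linarith) (by linarith) (by linarith)
    (by positivity)
    (gammaRatio_rate hk (by linarith) (by linarith) (by linarith))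
    (gammaRatio_rate hk (by linarith) (by linarith) (by linarith))
  rw [← hJ] at main
  unfold Ufun U1
  rw [← mul_sub, norm_mul]
  have hc : ‖(1 / (2 * (Real.pi : ℂ)))‖ = 1 / (2 * Real.pi) := by
    rw [norm_div, norm_mul, Complex.norm_real, Real.norm_of_nonneg hπ.le]; simp
  rw [hc]
  have eU : ∀ t : ℝ, (y : ℂ) ^ (-(3 + t * Complex.I)) * Complex.exp ((3 + t * Complex.I) ^ 2) *
      (gammaFac ℓ k (1/2 + 3 + t * Complex.I) / gammaFac ℓ k (1/2)) / (3 + t * Complex.I) =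
      Complex.exp ((3 + t * Complex.I) ^ 2) *
        ((y / (k : ℝ) ^ 2 * (16 * Real.pi ^ 2) : ℝ) : ℂ) ^ (-(3 + t * Complex.I)) *
        (gammaRatio (((k : ℝ) + ℓ - 1) / 2) ((k : ℝ) / 2) (3 + t * Complex.I) *
          gammaRatio (((k : ℝ) - ℓ + 1) / 2) ((k : ℝ) / 2) (3 + t * Complex.I)) /
          (3 + t * Complex.I) := by
    intro t
    rw [mul_assoc (Complex.exp _), ← gammaFac_ratio hk hy0, ← add_assoc]
    ring
  have eU1 : ∀ t : ℝ, ((y / (k : ℝ) ^ 2 : ℝ) : ℂ) ^ (-(3 + t * Complex.I)) *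
      Complex.exp ((3 + t * Complex.I) ^ 2) *
      (16 * (Real.pi : ℂ) ^ 2) ^ (-(3 + t * Complex.I)) / (3 + t * Complex.I) =
      Complex.exp ((3 + t * Complex.I) ^ 2) *
        ((y / (k : ℝ) ^ 2 * (16 * Real.pi ^ 2) : ℝ) : ℂ) ^ (-(3 + t * Complex.I)) /
          (3 + t * Complex.I) := by
    intro t
    rw [Complex.ofReal_mul, Complex.mul_cpow_ofReal_nonneg (by positivity) (by positivity)]
    have : ((16 * Real.pi ^ 2 : ℝ) : ℂ) = 16 * (Real.pi : ℂ) ^ 2 := by push_cast; ring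
    rw [this]
    ring
  simp_rw [eU, eU1]
  calc _ ≤ 1 / (2 * Real.pi) * (2 * ((4 * ℓ + 8) / k) * J) := by gcongr
    _ = (1 / (2 * Real.pi) * (2 * (4 * ℓ + 8) * J)) / k := by ring
    _ ≤ _ := by gcongr; linarith
end

section
/- Let W : ℝ → ℝ be a smooth function supported in [1/2, 3]. For each choice of sign ± and every A > 0 there exists a constant C > 0 such that for all real N ≥ 2, all real q with 1 ≤ q ≤ √N, all real u with |u| ≤ N^{1/100}, and all integers n ≥ N^{1/10}, one has |∫_0^∞ W(x) x^{−1/4} e( uNx/(q√N) ± 2√(nNx)/q ) dx| ≤ C N^{−A}. -/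
/-! The phase is `β (√x + c x / 2)` with `β = 2 ε √(n N) / q` and `c = ε u / √n`, and its derivative
is `β / (2 √x) * (1 + c √x)`.  Once `N ≥ 4 ^ 25` one has `|c| ≤ N ^ (-1/25) ≤ 1/4`, so on the support
of `W` there is no stationary point, and `|β| ≥ N ^ (1/20)`.

The decay comes from repeated integration by parts.  To keep all constants uniform in `c`, the
amplitudes considered are `h(x) (1 + c √x) ^ (-m)` with `h` smooth, supported in `[1/2, 3]` and
independent of `c` and `β`.  One integration by parts turns such an integral into `1 / β` times a
combination of two integrals of the same kind, with data `((h √x)', m + 1)` and `(h, m + 2)`, so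
induction on `k` gives the bound `O(|β| ^ (-k))` for every `k` (`oscInt_bound`).  For `N < 4 ^ 25`
the trivial bound suffices. -/

open Complex Real MeasureTheory

/-- `e(x) = e^{2πix}`. -/
noncomputable def e (x : ℝ) : ℂ := Complex.exp (2 * Real.pi * Complex.I * x)

/-- The integrand `h(x) (1 + c √x) ^ (-m) e(β (√x + c x / 2))`. -/
noncomputable def oscInt (h : ℝ → ℝ) (m : ℕ) (c β x : ℝ) : ℂ :=
  (h x : ℂ) * ((((1 + c * √x) ^ m)⁻¹ : ℝ) : ℂ) * e (β * (√x + c * x / 2))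

lemma norm_e (x : ℝ) : ‖e x‖ = 1 := by
  have : (2 * Real.pi * Complex.I * x : ℂ) = ((2 * Real.pi * x : ℝ) : ℂ) * Complex.I := by
    push_cast; ring
  rw [e, this, Complex.norm_exp_ofReal_mul_I]

lemma hasDerivAt_e (x : ℝ) : HasDerivAt e (2 * Real.pi * Complex.I * e x) x := by
  have h1 : HasDerivAt (fun y : ℝ => (2 * Real.pi * Complex.I * (y : ℂ)))
      (2 * Real.pi * Complex.I * 1) x :=
    (Complex.ofRealCLM.hasDerivAt (x := x)).const_mul _
  have h2 := h1.cexp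
  unfold e
  convert h2 using 1
  ring

lemma continuous_e : Continuous e := by
  unfold e; fun_prop

lemma p_lower {c x : ℝ} (hc : |c| ≤ 1 / 4) (hx : x ≤ 4) : 1 / 2 ≤ 1 + c * √x := by
  have h1 : √x ≤ 2 := by
    rw [show (2 : ℝ) = √4 by rw [show (4 : ℝ) = 2 ^ 2 by norm_num]; simp]
    exact Real.sqrt_le_sqrt hx
  have h2 : |c * √x| ≤ 1 / 4 * 2 := by
    rw [abs_mul, abs_of_nonneg (Real.sqrt_nonneg x)]
    exact mul_le_mul hc h1 (Real.sqrt_nonneg x) (by norm_num)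
  linarith [neg_abs_le (c * √x)]

/-- A smooth function supported in `[1/2, 3]` may be multiplied by any function that is smooth on
the positive half-line. -/
lemma contDiff_mul_of_supp {h f : ℝ → ℝ} (hh : ContDiff ℝ (⊤ : ℕ∞) h)
    (hs : ∀ x, x ∉ Set.Icc (1/2 : ℝ) 3 → h x = 0)
    (hf : ∀ x, 0 < x → ContDiffAt ℝ (⊤ : ℕ∞) f x) :
    ContDiff ℝ (⊤ : ℕ∞) (fun x => h x * f x) := by
  rw [contDiff_iff_contDiffAt]
  intro x
  rcases lt_or_ge 0 x with hx | hx
  · exact hh.contDiffAt.mul (hf x hx)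
  · have : (fun x => h x * f x) =ᶠ[nhds x] fun _ => 0 := by
      filter_upwards [Iio_mem_nhds (show x < 1/2 by linarith)] with y hy
      rw [hs y (fun h => absurd h.1 (not_le.mpr hy)), zero_mul]
    exact contDiffAt_const.congr_of_eventuallyEq this

lemma deriv_supp {h : ℝ → ℝ} (hs : ∀ x, x ∉ Set.Icc (1/2 : ℝ) 3 → h x = 0) :
    ∀ x, x ∉ Set.Icc (1/2 : ℝ) 3 → deriv h x = 0 := by
  intro x hx
  have : h =ᶠ[nhds x] fun _ => 0 := by
    filter_upwards [isClosed_Icc.isOpen_compl.mem_nhds hx] with y hy using hs y hy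
  rw [this.deriv_eq, deriv_const]

lemma oscInt_intervalIntegrable {h : ℝ → ℝ} (hh : Continuous h) (m : ℕ) {c : ℝ}
    (hc : |c| ≤ 1 / 4) (β : ℝ) :
    IntervalIntegrable (oscInt h m c β) volume (1/4) 4 := by
  apply ContinuousOn.intervalIntegrable
  rw [Set.uIcc_of_le (by norm_num)]
  have h1 : ContinuousOn (fun x : ℝ => ((1 + c * √x) ^ m)⁻¹) (Set.Icc (1/4) 4) := by
    apply ContinuousOn.inv₀ (by fun_prop)
    intro x hx
    have := p_lower hc hx.2
    positivity
  unfold oscInt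
  refine ContinuousOn.mul (ContinuousOn.mul (by fun_prop) ?_) ?_
  · exact Complex.continuous_ofReal.comp_continuousOn h1
  · exact (continuous_e.comp (by fun_prop)).continuousOn

lemma oscInt_hasDerivAt {h : ℝ → ℝ} (hh : ContDiff ℝ (⊤ : ℕ∞) (fun x => h x * √x)) (m : ℕ) {c : ℝ}
    (hc : |c| ≤ 1 / 4) (β : ℝ) {x : ℝ} (hx0 : 0 < x) (hx : x ≤ 4) :
    HasDerivAt (oscInt (fun x => h x * √x) (m + 1) c β)
      (oscInt (deriv (fun x => h x * √x)) (m + 1) c β x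
        - ((m + 1) * c / 2 : ℝ) * oscInt h (m + 2) c β x
        + (Real.pi * Complex.I * β) * oscInt h m c β x) x := by
  have hp := p_lower hc hx
  have hp0 : 1 + c * √x ≠ 0 := by linarith
  have hsq : √x ≠ 0 := (Real.sqrt_pos.mpr hx0).ne'
  have d1 := ((hh.differentiable (by simp)) x).hasDerivAt.ofReal_comp
  have ds : HasDerivAt (fun x : ℝ => √x) (1 / (2 * √x)) x := Real.hasDerivAt_sqrt hx0.ne'
  have d2 := ((((ds.const_mul c).const_add 1).pow (m + 1)).inv (pow_ne_zero _ hp0)).ofReal_comp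
  have d3 : HasDerivAt (fun x : ℝ => β * (√x + c * x / 2)) (β * (1 / (2 * √x) + c * 1 / 2)) x :=
    (ds.add (((hasDerivAt_id x).const_mul c).div_const 2)).const_mul β
  have d4 := (hasDerivAt_e (β * (√x + c * x / 2))).scomp x d3
  have D := (d1.mul d2).mul d4
  refine HasDerivAt.congr_deriv (f := oscInt (fun x => h x * √x) (m + 1) c β) D ?_
  have hp0' : (1 + c * √x : ℂ) ≠ 0 := by exact_mod_cast hp0
  have hsq' : (√x : ℂ) ≠ 0 := by exact_mod_cast hsq
  simp only [oscInt, Complex.real_smul, Function.comp_def, Pi.mul_apply]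
  generalize deriv (fun x => h x * √x) x = D1
  generalize e (β * (√x + c * x / 2)) = E
  push_cast
  simp
  field_simp
  ring

/-- Non-stationary phase, uniformly in `c`: every integral of the class decays faster than any
power of `β`. -/
lemma oscInt_bound (k : ℕ) : ∀ (h : ℝ → ℝ) (_ : ContDiff ℝ (⊤ : ℕ∞) h)
    (_ : ∀ x, x ∉ Set.Icc (1/2 : ℝ) 3 → h x = 0) (m : ℕ),
    ∃ C : ℝ, 0 ≤ C ∧ ∀ c : ℝ, |c| ≤ 1 / 4 → ∀ β : ℝ, β ≠ 0 →
      ‖∫ x in (1/4 : ℝ)..4, oscInt h m c β x‖ ≤ C / |β| ^ k := by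
  induction k with
  | zero =>
    intro h hh hs m
    obtain ⟨K, hK⟩ := (isCompact_Icc (a := (1/4 : ℝ)) (b := 4)).exists_bound_of_continuousOn
      hh.continuous.continuousOn
    have hK0 : 0 ≤ K := (norm_nonneg _).trans (hK 1 (by norm_num))
    refine ⟨K * 2 ^ m * |4 - 1/4|, by positivity, fun c hc β hβ => ?_⟩
    rw [pow_zero, div_one]
    apply intervalIntegral.norm_integral_le_of_norm_le_const
    intro x hx
    rw [Set.uIoc_of_le (by norm_num)] at hx
    have hp := p_lower hc hx.2
    rw [oscInt, norm_mul, norm_mul, norm_e, mul_one, Complex.norm_real, Complex.norm_real]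
    refine mul_le_mul (hK x ⟨hx.1.le, hx.2⟩) ?_ (norm_nonneg _) hK0
    rw [Real.norm_of_nonneg (by positivity), ← inv_pow]
    refine pow_le_pow_left₀ (by positivity) ?_ m
    rw [inv_le_comm₀ (by linarith) (by norm_num)]
    linarith
  | succ k ih =>
    intro h hh hs m
    have hg : ContDiff ℝ (⊤ : ℕ∞) (fun x => h x * √x) :=
      contDiff_mul_of_supp hh hs fun x hx => Real.contDiffAt_sqrt hx.ne'
    have hgs : ∀ x, x ∉ Set.Icc (1/2 : ℝ) 3 → h x * √x = 0 := fun x hx => by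
      rw [hs x hx, zero_mul]
    have hg' : ContDiff ℝ (⊤ : ℕ∞) (deriv (fun x => h x * √x)) :=
      (contDiff_infty_iff_deriv.mp hg).2
    obtain ⟨C1, hC1, h1⟩ := ih _ hg' (deriv_supp hgs) (m + 1)
    obtain ⟨C2, hC2, h2⟩ := ih h hh hs (m + 2)
    refine ⟨C1 + (m + 1) * C2, by positivity, fun c hc β hβ => ?_⟩
    have i1 := oscInt_intervalIntegrable hg'.continuous (m + 1) hc β
    have i2 := oscInt_intervalIntegrable hh.continuous (m + 2) hc β
    have i3 := oscInt_intervalIntegrable hh.continuous m hc β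
    have key := intervalIntegral.integral_eq_sub_of_hasDerivAt (a := 1/4) (b := 4)
      (fun x hx => by
        rw [Set.uIcc_of_le (by norm_num)] at hx
        exact oscInt_hasDerivAt (h := h) hg m hc β (by linarith [hx.1]) hx.2)
      ((i1.sub (i2.const_mul _)).add (i3.const_mul _))
    rw [intervalIntegral.integral_add (i1.sub (i2.const_mul _)) (i3.const_mul _),
      intervalIntegral.integral_sub i1 (i2.const_mul _), intervalIntegral.integral_const_mul,
      intervalIntegral.integral_const_mul] at key
    have e1 : oscInt (fun x => h x * √x) (m + 1) c β 4 = 0 := by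
      simp only [oscInt, hgs 4 (by norm_num)]; simp
    have e2 : oscInt (fun x => h x * √x) (m + 1) c β (1/4) = 0 := by
      simp only [oscInt, hgs (1/4) (by norm_num)]; simp
    rw [e1, e2, sub_zero] at key
    have b1 := h1 c hc β hβ
    have b2 := h2 c hc β hβ
    set I1 := ∫ x in (1/4 : ℝ)..4, oscInt (deriv fun x => h x * √x) (m + 1) c β x
    set I2 := ∫ x in (1/4 : ℝ)..4, oscInt h (m + 2) c β x
    set I3 := ∫ x in (1/4 : ℝ)..4, oscInt h m c β x
    have key2 : (Real.pi * Complex.I * β) * I3 = (((m + 1) * c / 2 : ℝ) : ℂ) * I2 - I1 := by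
      linear_combination key
    have hβ' : 0 < |β| := abs_pos.mpr hβ
    have nrm : Real.pi * |β| * ‖I3‖ ≤ (m + 1) * ‖I2‖ + ‖I1‖ := by
      have := congrArg norm key2
      rw [norm_mul, norm_mul, norm_mul, Complex.norm_I, Complex.norm_real, Complex.norm_real,
        Real.norm_of_nonneg Real.pi_pos.le, Real.norm_eq_abs, mul_one] at this
      rw [this]
      refine (norm_sub_le _ _).trans (add_le_add_left ?_ _)
      rw [norm_mul, Complex.norm_real]
      refine mul_le_mul_of_nonneg_right ?_ (norm_nonneg _)
      rw [Real.norm_eq_abs, abs_div, abs_mul, abs_of_nonneg (by positivity : (0 : ℝ) ≤ m + 1), abs_two]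
      have : (0 : ℝ) ≤ m + 1 := by positivity
      nlinarith
    rw [pow_succ, ← div_div, le_div_iff₀ hβ']
    calc ‖I3‖ * |β| ≤ Real.pi * |β| * ‖I3‖ := by
          have : 0 ≤ ‖I3‖ * |β| := by positivity
          nlinarith [Real.pi_gt_three]
      _ ≤ (m + 1) * (C2 / |β| ^ k) + C1 / |β| ^ k := by
          refine nrm.trans (add_le_add (mul_le_mul_of_nonneg_left b2 (by positivity)) b1)
      _ = (C1 + (m + 1) * C2) / |β| ^ k := by ring

theorem oscillatory_integral_negligible (W : ℝ → ℝ) (hW : ContDiff ℝ (⊤ : ℕ∞) W)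
    (hWsupp : Function.support W ⊆ Set.Icc (1/2 : ℝ) 3)
    (ε : ℝ) (hε : ε = 1 ∨ ε = -1) (A : ℝ) (hA : 0 < A) :
    ∃ C > 0, ∀ N : ℝ, 2 ≤ N → ∀ q : ℝ, 1 ≤ q → q ≤ Real.sqrt N →
      ∀ u : ℝ, |u| ≤ N ^ (1/100 : ℝ) → ∀ n : ℕ, N ^ (1/10 : ℝ) ≤ n →
        ‖∫ x in Set.Ioi (0:ℝ),
            (W x : ℂ) * ((x ^ (-(1/4 : ℝ)) : ℝ) : ℂ) *
              e (u * N * x / (q * Real.sqrt N) + ε * (2 * Real.sqrt (n * N * x) / q))‖ ≤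
          C * N ^ (-A) := by
  have hs : ∀ x, x ∉ Set.Icc (1/2 : ℝ) 3 → W x = 0 := fun x hx => by
    by_contra h
    exact hx (hWsupp h)
  set h : ℝ → ℝ := fun x => W x * x ^ (-(1/4 : ℝ)) with hdef
  have hh : ContDiff ℝ (⊤ : ℕ∞) h :=
    contDiff_mul_of_supp hW hs fun x hx => Real.contDiffAt_rpow_const_of_ne hx.ne'
  have hhs : ∀ x, x ∉ Set.Icc (1/2 : ℝ) 3 → h x = 0 := fun x hx => by
    simp only [hdef, hs x hx, zero_mul]
  obtain ⟨k, hk⟩ := exists_nat_ge (20 * A)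
  obtain ⟨C, hC, hb⟩ := oscInt_bound k h hh hhs 0
  obtain ⟨K, hK⟩ := (isCompact_Icc (a := (1/4 : ℝ)) (b := 4)).exists_bound_of_continuousOn
      hh.continuous.continuousOn
  have hK0 : 0 ≤ K := (norm_nonneg _).trans (hK 1 (by norm_num))
  -- The second summand serves the range `N < 4 ^ 25`.
  refine ⟨C + (K * |4 - 1/4|) * (4 ^ 25 : ℝ) ^ A + 1, by positivity, ?_⟩
  intro N hN q hq1 hq2 u hu n hn
  have hN0 : 0 < N := by linarith
  have hq0 : 0 < q := by linarith
  have hsN : 0 < √N := Real.sqrt_pos.mpr hN0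
  have hn0 : (0 : ℝ) < n := lt_of_lt_of_le (by positivity) hn
  have hsn : 0 < √(n : ℝ) := Real.sqrt_pos.mpr hn0
  set f : ℝ → ℂ := fun x => (W x : ℂ) * ((x ^ (-(1/4 : ℝ)) : ℝ) : ℂ) *
              e (u * N * x / (q * Real.sqrt N) + ε * (2 * Real.sqrt (n * N * x) / q)) with hf
  have hfh : ∀ x, f x = (h x : ℂ) *
      e (u * N * x / (q * Real.sqrt N) + ε * (2 * Real.sqrt (n * N * x) / q)) := fun x => by
    simp only [hf, hdef]; push_cast; rfl
  have hres : ∫ x in Set.Ioi (0:ℝ), f x = ∫ x in (1/4 : ℝ)..4, f x := by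
    rw [intervalIntegral.integral_of_le (by norm_num)]
    refine (setIntegral_eq_of_subset_of_forall_sdiff_eq_zero measurableSet_Ioi ?_ ?_)
    · intro x hx
      exact lt_trans (by norm_num) hx.1
    · intro x hx
      have : h x = 0 := hhs x fun hx' => hx.2 ⟨by linarith [hx'.1], by linarith [hx'.2]⟩
      rw [hfh, this]; simp
  rw [hres]
  have hNA : 0 < N ^ (-A) := by positivity
  rcases lt_or_ge N (4 ^ 25) with hlt | hge
  · have htriv : ‖∫ x in (1/4 : ℝ)..4, f x‖ ≤ K * |4 - 1/4| := by
      apply intervalIntegral.norm_integral_le_of_norm_le_const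
      intro x hx
      rw [Set.uIoc_of_le (by norm_num)] at hx
      rw [hfh, norm_mul, norm_e, mul_one, Complex.norm_real]
      exact hK x ⟨hx.1.le, hx.2⟩
    have h1 : 1 ≤ (4 ^ 25 : ℝ) ^ A * N ^ (-A) := by
      have h2 : N ^ A * N ^ (-A) = 1 := by
        rw [← Real.rpow_add hN0]; simp
      rw [← h2]
      exact mul_le_mul_of_nonneg_right (Real.rpow_le_rpow hN0.le hlt.le hA.le) hNA.le
    have hKK : 0 ≤ K * |4 - 1/4| := by positivity
    calc _ ≤ K * |4 - 1/4| * 1 := by rw [mul_one]; exact htriv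
      _ ≤ K * |4 - 1/4| * ((4 ^ 25 : ℝ) ^ A * N ^ (-A)) := mul_le_mul_of_nonneg_left h1 hKK
      _ ≤ _ := by nlinarith
  · have hεabs : |ε| = 1 := by rcases hε with h | h <;> simp [h]
    have hε2 : ε * ε = 1 := by rcases hε with h | h <;> simp [h]
    have hsn2 : N ^ (1/20 : ℝ) ≤ √(n : ℝ) := by
      apply Real.le_sqrt_of_sq_le
      rw [← Real.rpow_natCast, ← Real.rpow_mul hN0.le]
      norm_num at hn ⊢
      exact hn
    have hc : |ε * u / √(n : ℝ)| ≤ 1 / 4 := by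
      rw [abs_div, abs_mul, hεabs, one_mul, abs_of_pos hsn, div_le_iff₀ hsn]
      have h4 : (4 : ℝ) ≤ N ^ (1/25 : ℝ) := by
        calc (4 : ℝ) = ((4 : ℝ) ^ 25) ^ (1/25 : ℝ) := by
              rw [← Real.rpow_natCast, ← Real.rpow_mul (by norm_num)]; norm_num
          _ ≤ _ := Real.rpow_le_rpow (by norm_num) hge (by norm_num)
      have h5 : N ^ (1/20 : ℝ) = N ^ (1/25 : ℝ) * N ^ (1/100 : ℝ) := by
        rw [← Real.rpow_add hN0]; norm_num
      have h6 : 0 < N ^ (1/100 : ℝ) := by positivity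
      nlinarith
    have hβ : N ^ (1/20 : ℝ) ≤ |2 * ε * √(n : ℝ) * √N / q| := by
      rw [abs_div, abs_mul, abs_mul, abs_mul, hεabs, abs_two, abs_of_pos hsn, abs_of_pos hsN,
        abs_of_pos hq0, le_div_iff₀ hq0]
      have : √(n : ℝ) * q ≤ √(n : ℝ) * √N := mul_le_mul_of_nonneg_left hq2 hsn.le
      have : N ^ (1/20 : ℝ) * q ≤ √(n : ℝ) * q := mul_le_mul_of_nonneg_right hsn2 hq0.le
      have : 0 < √(n : ℝ) * √N := by positivity
      linarith
    have hpos : 0 < N ^ (1/20 : ℝ) := by positivity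
    have hβ0 : 2 * ε * √(n : ℝ) * √N / q ≠ 0 := abs_pos.mp (hpos.trans_le hβ)
    have hfo : ∀ x, f x = oscInt h 0 (ε * u / √(n : ℝ)) (2 * ε * √(n : ℝ) * √N / q) x := by
      intro x
      rw [hfh, oscInt, pow_zero, inv_one, Complex.ofReal_one, mul_one]
      congr 2
      rw [Real.sqrt_mul (by positivity), Real.sqrt_mul hn0.le]
      have hNN : N = √N * √N := (Real.mul_self_sqrt hN0.le).symm
      have e1 : u * N * x / (q * √N) = u * √N * x / q := by
        rw [div_eq_div_iff (by positivity) (by positivity)]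
        linear_combination u * x * q * hNN
      rw [e1]
      field_simp
      linear_combination (-u * x) * hε2
    simp_rw [hfo]
    refine (hb _ hc _ hβ0).trans ?_
    have hpk : N ^ A ≤ |2 * ε * √(n : ℝ) * √N / q| ^ k := by
      calc N ^ A ≤ N ^ (1/20 * k : ℝ) :=
            Real.rpow_le_rpow_of_exponent_le (by linarith) (by linarith)
        _ = (N ^ (1/20 : ℝ)) ^ k := by rw [Real.rpow_mul hN0.le, Real.rpow_natCast]
        _ ≤ _ := pow_le_pow_left₀ hpos.le hβ k
    have hNA' : 0 < N ^ A := by positivity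
    calc C / |2 * ε * √(n : ℝ) * √N / q| ^ k ≤ C / N ^ A :=
          div_le_div_of_nonneg_left hC hNA' hpk
      _ = C * N ^ (-A) := by rw [Real.rpow_neg hN0.le]; rfl
      _ ≤ _ := by
          refine mul_le_mul_of_nonneg_right ?_ hNA.le
          have : 0 ≤ K * |4 - 1/4| * (4 ^ 25 : ℝ) ^ A := by positivity
          linarith
end
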